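/- Let s > 3/2. There exists a constant C (depending on φ and s but not on n) such that for every sufficiently large integer n, the function f_n(x) = 2^{-ns} φ(x) sin((17/12)·2^n x) satisfies ‖f_n ∂_x f_n‖_{H^s(ℝ)} ≤ C·2^{-n(s-1)}. -/

import Mathlib

open MeasureTheory Filter

/-- Fourier transform with convention `f̂(ξ) = ∫ f(x) e^{-i x ξ} dx`. -/
noncomputable def fourierT (f : ℝ → ℂ) (ξ : ℝ) : ℂ :=
  ∫ x : ℝ, f x * Complex.exp (-(Complex.I * x * ξ))

/-- The `H^s(ℝ)` norm, `‖f‖_{H^s}² = ∫ (1+|ξ|²)^s |f̂(ξ)|² dξ`. -/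
noncomputable def sobolevNorm (s : ℝ) (f : ℝ → ℂ) : ℝ :=
  Real.sqrt (∫ ξ : ℝ, (1 + ξ ^ 2) ^ s * ‖fourierT f ξ‖ ^ 2)

/-- Membership in `H^s(ℝ)` (for integrable representatives). -/
def MemSobolev (s : ℝ) (f : ℝ → ℂ) : Prop :=
  MeasureTheory.Integrable f ∧
    MeasureTheory.Integrable (fun ξ : ℝ => (1 + ξ ^ 2) ^ s * ‖fourierT f ξ‖ ^ 2)

/-- The high-frequency functions `f_n(x) = 2^{-ns} φ(x) sin((17/12)·2^n x)`. -/
noncomputable def fn (s : ℝ) (φ : ℝ → ℂ) (n : ℕ) : ℝ → ℂ :=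
  fun x => (((2 : ℝ) ^ (-(n : ℝ) * s) * Real.sin (17 / 12 * 2 ^ n * x) : ℝ) : ℂ) * φ x

/-- The low-frequency functions `g_n(x) = 2^{-n} φ(x)`. -/
noncomputable def gn (φ : ℝ → ℂ) (n : ℕ) : ℝ → ℂ :=
  fun x => (((2 : ℝ) ^ (-(n : ℝ)) : ℝ) : ℂ) * φ x

/-- `φ̂` is an even, real-valued, nonnegative function in `C_c^∞(ℝ)` with `φ̂ = 1` on
`{|ξ| ≤ 1/4}` and `φ̂ = 0` on `{|ξ| ≥ 1/2}`, and `φ` is the (continuous, integrable)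
function on `ℝ` whose Fourier transform is `φ̂`. -/
structure CutoffPair (φhat : ℝ → ℝ) (φ : ℝ → ℂ) : Prop where
  smooth : ContDiff ℝ (⊤ : ℕ∞) φhat
  compactSupport : HasCompactSupport φhat
  even : ∀ ξ : ℝ, φhat (-ξ) = φhat ξ
  nonneg : ∀ ξ : ℝ, 0 ≤ φhat ξ
  eq_one : ∀ ξ : ℝ, |ξ| ≤ 1 / 4 → φhat ξ = 1
  eq_zero : ∀ ξ : ℝ, 1 / 2 ≤ |ξ| → φhat ξ = 0
  continuous : Continuous φ
  integrable : MeasureTheory.Integrable φ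
  fourier_eq : ∀ ξ : ℝ, fourierT φ ξ = (φhat ξ : ℂ)

open scoped FourierTransform SchwartzMap

lemma fourierT_eq (f : ℝ → ℂ) (ξ : ℝ) : fourierT f ξ = 𝓕 f (ξ / (2 * Real.pi)) := by
  rw [Real.fourier_real_eq_integral_exp_smul]
  unfold fourierT
  congr 1
  ext x
  rw [smul_eq_mul, mul_comm]
  congr 2
  push_cast
  have : (Real.pi : ℂ) ≠ 0 := by exact_mod_cast Real.pi_ne_zero
  field_simp

lemma exists_schwartz (φhat : ℝ → ℝ) (φ : ℝ → ℂ) (hφ : CutoffPair φhat φ) :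
    ∃ g : 𝓢(ℝ, ℂ), ∀ x, φ x = g x := by
  have h2 : (2 * Real.pi) ≠ 0 := by positivity
  have hF : 𝓕 φ = fun w => (φhat (2 * Real.pi * w) : ℂ) := by
    ext w
    rw [← hφ.fourier_eq, fourierT_eq]
    field_simp
  have hc : HasCompactSupport (𝓕 φ) := by
    rw [hF]
    have h1 : HasCompactSupport (fun w => φhat (2 * Real.pi * w)) :=
      hφ.compactSupport.comp_homeomorph (Homeomorph.mulLeft₀ (2 * Real.pi) h2)
    exact h1.comp_left (g := fun r : ℝ => (r : ℂ)) (by simp)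
  have hs : ContDiff ℝ (⊤ : ℕ∞) (𝓕 φ) := by
    rw [hF]
    exact Complex.ofRealCLM.contDiff.comp (hφ.smooth.comp (contDiff_const.mul contDiff_id))
  refine ⟨𝓕⁻ (hc.toSchwartzMap hs), fun x => ?_⟩
  have hi : Integrable (𝓕 φ) := (hc.toSchwartzMap hs).integrable
  have := hφ.continuous.fourierInv_fourier_eq hφ.integrable hi
  rw [SchwartzMap.fourierInv_coe]
  exact (congrFun this x).symm

lemma schwartz_decay (s : ℝ) (g : 𝓢(ℝ, ℂ)) :
    ∃ K : ℝ, 0 ≤ K ∧ ∀ ξ : ℝ, (1 + ξ ^ 2) ^ (s + 1) * ‖fourierT g ξ‖ ^ 2 ≤ K := by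
  obtain ⟨m, hm⟩ := exists_nat_ge (s + 1)
  obtain ⟨K, hK⟩ : ∃ K : ℝ, ∀ w : ℝ, (1 + ‖w‖) ^ m * ‖𝓕 (g : ℝ → ℂ) w‖ ≤ K := by
    refine ⟨2 ^ m * (Finset.Iic (m, 0)).sup (fun m => SchwartzMap.seminorm ℂ m.1 m.2) (𝓕 g),
      fun w => ?_⟩
    have := SchwartzMap.one_add_le_sup_seminorm_apply (𝕜 := ℂ) (m := (m, 0)) (k := m) (n := 0)
      le_rfl le_rfl (𝓕 g) w
    rw [norm_iteratedFDeriv_zero] at this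
    exact this
  refine ⟨(8 ^ m * K) ^ 2, by positivity, fun ξ => ?_⟩
  rw [fourierT_eq]
  set w := ξ / (2 * Real.pi) with hw
  have hξ : |ξ| ≤ 8 * |w| := by
    have : ξ = 2 * Real.pi * w := by rw [hw]; field_simp
    rw [this, abs_mul, abs_of_pos (by positivity)]
    have := Real.pi_lt_four
    gcongr
    linarith
  have h1 : (1 + ξ ^ 2) ^ (s + 1) ≤ ((8 * (1 + |w|)) ^ m) ^ 2 := by
    calc (1 + ξ ^ 2) ^ (s + 1) ≤ (1 + ξ ^ 2) ^ (m : ℝ) :=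
          Real.rpow_le_rpow_of_exponent_le (by nlinarith [sq_nonneg ξ]) hm
      _ = (1 + ξ ^ 2) ^ m := Real.rpow_natCast _ _
      _ ≤ ((8 * (1 + |w|)) ^ 2) ^ m := by
          gcongr
          rw [← sq_abs ξ]
          nlinarith [abs_nonneg ξ, abs_nonneg w]
      _ = _ := pow_right_comm _ _ _
  calc _ ≤ ((8 * (1 + |w|)) ^ m) ^ 2 * ‖𝓕 (g : ℝ → ℂ) w‖ ^ 2 := by gcongr
    _ = (8 ^ m * ((1 + ‖w‖) ^ m * ‖𝓕 (g : ℝ → ℂ) w‖)) ^ 2 := by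
        rw [Real.norm_eq_abs]; simp only [mul_pow]; ring
    _ ≤ _ := by gcongr; exact hK w

lemma peetre (s : ℝ) (hs : 0 ≤ s) (a ξ : ℝ) :
    (1 + ξ ^ 2) ^ s ≤ 2 ^ s * (1 + a ^ 2) ^ s * (1 + (ξ - a) ^ 2) ^ s := by
  rw [← Real.mul_rpow (by positivity) (by positivity), ← Real.mul_rpow (by positivity) (by positivity)]
  apply Real.rpow_le_rpow (by positivity) _ hs
  nlinarith [sq_nonneg (ξ - 2 * a), sq_nonneg (a * (ξ - a))]

lemma shifted_bound (s K : ℝ) (hs : 0 ≤ s) (G : ℝ → ℂ)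
    (hG : ∀ ξ : ℝ, (1 + ξ ^ 2) ^ (s + 1) * ‖G ξ‖ ^ 2 ≤ K) (a ξ : ℝ) :
    (1 + ξ ^ 2) ^ s * ‖G (ξ - a)‖ ^ 2 ≤ 2 ^ s * (1 + a ^ 2) ^ s * K * (1 + (ξ - a) ^ 2)⁻¹ := by
  have h0 : 0 < 1 + (ξ - a) ^ 2 := by positivity
  have h := hG (ξ - a)
  rw [Real.rpow_add h0, Real.rpow_one] at h
  have h2 : (1 + (ξ - a) ^ 2) ^ s * ‖G (ξ - a)‖ ^ 2 ≤ K * (1 + (ξ - a) ^ 2)⁻¹ := by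
    rw [← div_eq_mul_inv, le_div_iff₀ h0]; linarith
  calc _ ≤ 2 ^ s * (1 + a ^ 2) ^ s * (1 + (ξ - a) ^ 2) ^ s * ‖G (ξ - a)‖ ^ 2 := by
        gcongr; exact peetre s hs a ξ
    _ = 2 ^ s * (1 + a ^ 2) ^ s * ((1 + (ξ - a) ^ 2) ^ s * ‖G (ξ - a)‖ ^ 2) := by ring
    _ ≤ 2 ^ s * (1 + a ^ 2) ^ s * (K * (1 + (ξ - a) ^ 2)⁻¹) := by gcongr
    _ = _ := by ring

lemma fourierT_mod (g : ℝ → ℂ) (a ξ : ℝ) :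
    fourierT (fun x => Complex.exp (Complex.I * a * x) * g x) ξ = fourierT g (ξ - a) := by
  unfold fourierT
  congr 1
  ext x
  dsimp only
  rw [mul_comm (Complex.exp _), mul_assoc, ← Complex.exp_add]
  congr 2
  push_cast
  ring

lemma integrable_mod (g : ℝ → ℂ) (hg : Integrable g) (a : ℝ) :
    Integrable (fun x : ℝ => Complex.exp (Complex.I * a * x) * g x) := by
  refine hg.bdd_mul (c := 1) (by fun_prop) (Eventually.of_forall fun x => ?_)
  rw [Complex.norm_exp]; simp

lemma fourierT_add (f g : ℝ → ℂ) (hf : Integrable f) (hg : Integrable g) (ξ : ℝ) :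
    fourierT (fun x => f x + g x) ξ = fourierT f ξ + fourierT g ξ := by
  have key : ∀ h : ℝ → ℂ, Integrable h →
      Integrable fun x : ℝ => h x * Complex.exp (-(Complex.I * x * ξ)) := by
    intro h hh
    refine hh.mul_bdd (c := 1) (by fun_prop) (Eventually.of_forall fun x => ?_)
    rw [Complex.norm_exp]; simp
  unfold fourierT
  rw [← integral_add (key f hf) (key g hg)]
  simp only [add_mul]

lemma fourierT_const_mul (c : ℂ) (f : ℝ → ℂ) (ξ : ℝ) :
    fourierT (fun x => c * f x) ξ = c * fourierT f ξ := by
  unfold fourierT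
  rw [← integral_const_mul]
  simp only [mul_assoc]

lemma norm_sq_add5 (a b c d e : ℂ) :
    ‖a + b + c + d + e‖ ^ 2 ≤ 5 * (‖a‖ ^ 2 + ‖b‖ ^ 2 + ‖c‖ ^ 2 + ‖d‖ ^ 2 + ‖e‖ ^ 2) := by
  have h : ‖a + b + c + d + e‖ ≤ ‖a‖ + ‖b‖ + ‖c‖ + ‖d‖ + ‖e‖ := by
    refine (norm_add_le _ _).trans ?_
    gcongr
    refine (norm_add_le _ _).trans ?_
    gcongr
    exact norm_add₃_le
  calc _ ≤ (‖a‖ + ‖b‖ + ‖c‖ + ‖d‖ + ‖e‖) ^ 2 := by gcongr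
    _ ≤ _ := by
      nlinarith [sq_nonneg (‖a‖ - ‖b‖), sq_nonneg (‖a‖ - ‖c‖), sq_nonneg (‖a‖ - ‖d‖),
        sq_nonneg (‖a‖ - ‖e‖), sq_nonneg (‖b‖ - ‖c‖), sq_nonneg (‖b‖ - ‖d‖),
        sq_nonneg (‖b‖ - ‖e‖), sq_nonneg (‖c‖ - ‖d‖), sq_nonneg (‖c‖ - ‖e‖),
        sq_nonneg (‖d‖ - ‖e‖)]

/-- Pointwise formula for `f_n ∂_x f_n`. -/
lemma fn_mul_deriv (s : ℝ) (g : 𝓢(ℝ, ℂ)) (n : ℕ) (x : ℝ) :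
    fn s g n x * deriv (fn s g n) x =
      (((2 : ℝ) ^ (-(n : ℝ) * s)) ^ 2 : ℝ) *
      ((1 / 2) * (g x * deriv g x)
        + (-1 / 4) * (Complex.exp (Complex.I * ((17 / 6 * 2 ^ n : ℝ)) * x) * (g x * deriv g x))
        + (-1 / 4) * (Complex.exp (Complex.I * ((-(17 / 6 * 2 ^ n) : ℝ)) * x) * (g x * deriv g x))
        + (-Complex.I * (17 / 12 * 2 ^ n : ℝ) / 4) *
          (Complex.exp (Complex.I * ((17 / 6 * 2 ^ n : ℝ)) * x) * (g x * g x))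
        + (Complex.I * (17 / 12 * 2 ^ n : ℝ) / 4) *
          (Complex.exp (Complex.I * ((-(17 / 6 * 2 ^ n) : ℝ)) * x) * (g x * g x))) := by
  set c : ℝ := (2 : ℝ) ^ (-(n : ℝ) * s) with hc
  set l : ℝ := 17 / 12 * 2 ^ n with hl
  have hl2 : (17 / 6 * 2 ^ n : ℝ) = 2 * l := by rw [hl]; ring
  rw [hl2]
  have hsin : HasDerivAt (fun y : ℝ => c * Real.sin (l * y)) (c * (Real.cos (l * x) * l)) x := by
    have h := ((hasDerivAt_id x).const_mul l).sin
    simpa using h.const_mul c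
  have hd : HasDerivAt (fn s g n)
      (((c * (Real.cos (l * x) * l) : ℝ) : ℂ) * g x
        + ((c * Real.sin (l * x) : ℝ) : ℂ) * deriv g x) x :=
    hsin.ofReal_comp.mul (g.hasDerivAt x)
  rw [hd.deriv]
  have hf : fn s g n x = ((c * Real.sin (l * x) : ℝ) : ℂ) * g x := rfl
  rw [hf]
  push_cast
  have e1 : Complex.exp (Complex.I * (2 * l) * x)
      = (Complex.cos (l * x) + Complex.sin (l * x) * Complex.I) ^ 2 := by
    rw [← Complex.exp_mul_I, ← Complex.exp_nat_mul]; congr 1; push_cast; ring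
  have e2 : Complex.exp (Complex.I * (-(2 * l)) * x)
      = (Complex.cos (l * x) - Complex.sin (l * x) * Complex.I) ^ 2 := by
    have : Complex.cos (l * x) - Complex.sin (l * x) * Complex.I
        = Complex.exp (-(l * x) * Complex.I) := by
      rw [Complex.exp_mul_I, Complex.cos_neg, Complex.sin_neg]; ring
    rw [this, ← Complex.exp_nat_mul]; congr 1; push_cast; ring
  rw [e1, e2]
  have hsc := Complex.sin_sq_add_cos_sq ((l : ℂ) * x)
  generalize Complex.sin ((l : ℂ) * x) = S at *
  generalize Complex.cos ((l : ℂ) * x) = T at *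
  have hI : Complex.I ^ 2 = -1 := Complex.I_sq
  linear_combination ((c : ℂ) ^ 2 * (g x * deriv g x) / 2) * hsc
    + (c : ℂ) ^ 2 * ((g x * deriv g x) * S ^ 2 / 2 + l * S * T * g x * g x) * hI

lemma fourierT_add5 (f1 f2 f3 f4 f5 : ℝ → ℂ) (h1 : Integrable f1) (h2 : Integrable f2)
    (h3 : Integrable f3) (h4 : Integrable f4) (h5 : Integrable f5) (ξ : ℝ) :
    fourierT (fun x => f1 x + f2 x + f3 x + f4 x + f5 x) ξ =
      fourierT f1 ξ + fourierT f2 ξ + fourierT f3 ξ + fourierT f4 ξ + fourierT f5 ξ := by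
  have e1 := fourierT_add _ _ h1 h2 ξ
  have e2 := fourierT_add (fun x => f1 x + f2 x) _ (h1.add h2) h3 ξ
  have e3 := fourierT_add (fun x => f1 x + f2 x + f3 x) _ ((h1.add h2).add h3) h4 ξ
  have e4 := fourierT_add (fun x => f1 x + f2 x + f3 x + f4 x) _
    (((h1.add h2).add h3).add h4) h5 ξ
  rw [e4, e3, e2, e1]

/-- Fourier side formula for `f_n ∂_x f_n`. -/
lemma fourierT_fn_mul_deriv (s : ℝ) (g P X : 𝓢(ℝ, ℂ)) (hP : ∀ x, P x = g x * deriv g x)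
    (hX : ∀ x, X x = g x * g x) (n : ℕ) (ξ : ℝ) :
    fourierT (fun x => fn s g n x * deriv (fn s g n) x) ξ =
      (((2 : ℝ) ^ (-(n : ℝ) * s)) ^ 2 : ℝ) *
      ((1 / 2) * fourierT P ξ
        + (-1 / 4) * fourierT P (ξ - 17 / 6 * 2 ^ n)
        + (-1 / 4) * fourierT P (ξ - -(17 / 6 * 2 ^ n))
        + (-Complex.I * (17 / 12 * 2 ^ n : ℝ) / 4) * fourierT X (ξ - 17 / 6 * 2 ^ n)
        + (Complex.I * (17 / 12 * 2 ^ n : ℝ) / 4) * fourierT X (ξ - -(17 / 6 * 2 ^ n))) := by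
  simp only [fn_mul_deriv, ← hP, ← hX]
  have i0 := P.integrable (μ := volume)
  have i1 := integrable_mod _ i0 (17 / 6 * 2 ^ n)
  have i2 := integrable_mod _ i0 (-(17 / 6 * 2 ^ n))
  have j0 := X.integrable (μ := volume)
  have j1 := integrable_mod _ j0 (17 / 6 * 2 ^ n)
  have j2 := integrable_mod _ j0 (-(17 / 6 * 2 ^ n))
  rw [fourierT_const_mul, fourierT_add5 _ _ _ _ _ (i0.const_mul _) (i1.const_mul _)
    (i2.const_mul _) (j1.const_mul _) (j2.const_mul _)]
  simp only [fourierT_const_mul, fourierT_mod]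

lemma pointwise_bound (s : ℝ) (hs : 0 ≤ s) (g P X : 𝓢(ℝ, ℂ)) (hP : ∀ x, P x = g x * deriv g x)
    (hX : ∀ x, X x = g x * g x) (K : ℝ)
    (hKP : ∀ ξ : ℝ, (1 + ξ ^ 2) ^ (s + 1) * ‖fourierT P ξ‖ ^ 2 ≤ K)
    (hKX : ∀ ξ : ℝ, (1 + ξ ^ 2) ^ (s + 1) * ‖fourierT X ξ‖ ^ 2 ≤ K) (n : ℕ) (ξ : ℝ) :
    (1 + ξ ^ 2) ^ s * ‖fourierT (fun x => fn s g n x * deriv (fn s g n) x) ξ‖ ^ 2 ≤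
      (((2 : ℝ) ^ (-(n : ℝ) * s)) ^ 4 * (5 * (17 / 12 * 2 ^ n) ^ 2) *
        (2 ^ s * (1 + (17 / 6 * 2 ^ n) ^ 2) ^ s * K)) *
      ((1 + (ξ - 0) ^ 2)⁻¹ + 2 * (1 + (ξ - 17 / 6 * 2 ^ n) ^ 2)⁻¹
        + 2 * (1 + (ξ - -(17 / 6 * 2 ^ n)) ^ 2)⁻¹) := by
  rw [fourierT_fn_mul_deriv s g P X hP hX]
  have hK : 0 ≤ K := le_trans (by positivity) (hKP 0)
  have b0 := shifted_bound s K hs _ hKP 0 ξ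
  have b1 := shifted_bound s K hs _ hKP (17 / 6 * 2 ^ n) ξ
  have b2 := shifted_bound s K hs _ hKP (-(17 / 6 * 2 ^ n)) ξ
  have b3 := shifted_bound s K hs _ hKX (17 / 6 * 2 ^ n) ξ
  have b4 := shifted_bound s K hs _ hKX (-(17 / 6 * 2 ^ n)) ξ
  set c : ℝ := (2 : ℝ) ^ (-(n : ℝ) * s) with hc
  have hl1 : (1 : ℝ) ≤ 17 / 12 * 2 ^ n := by
    have : (1 : ℝ) ≤ 2 ^ n := one_le_pow₀ (by norm_num)
    linarith
  set l : ℝ := 17 / 12 * 2 ^ n with hl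
  set a : ℝ := 17 / 6 * 2 ^ n with ha
  rw [neg_sq] at b2 b4
  have b0' : (1 + ξ ^ 2) ^ s * ‖fourierT P ξ‖ ^ 2
      ≤ 2 ^ s * (1 + a ^ 2) ^ s * K * (1 + (ξ - 0) ^ 2)⁻¹ := by
    have : (1 + (0 : ℝ) ^ 2) ^ s ≤ (1 + a ^ 2) ^ s :=
      Real.rpow_le_rpow (by norm_num) (by nlinarith [sq_nonneg a]) hs
    rw [sub_zero] at b0
    rw [sub_zero]
    refine b0.trans ?_
    gcongr
  have hl2 : 1 ≤ l ^ 2 := one_le_pow₀ hl1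
  have hw : 0 ≤ (1 + ξ ^ 2) ^ s := by positivity
  set w := (1 + ξ ^ 2) ^ s with hwdef
  set D := 2 ^ s * (1 + a ^ 2) ^ s * K with hD
  set p0 := fourierT P ξ
  set p1 := fourierT P (ξ - a)
  set p2 := fourierT P (ξ - -a)
  set x1 := fourierT X (ξ - a)
  set x2 := fourierT X (ξ - -a)
  have key : ‖(1 / 2) * p0 + (-1 / 4) * p1 + (-1 / 4) * p2 + (-Complex.I * l / 4) * x1
      + (Complex.I * l / 4) * x2‖ ^ 2
      ≤ 5 * l ^ 2 * (‖p0‖ ^ 2 + ‖p1‖ ^ 2 + ‖p2‖ ^ 2 + ‖x1‖ ^ 2 + ‖x2‖ ^ 2) := by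
    refine (norm_sq_add5 _ _ _ _ _).trans ?_
    rw [mul_assoc]
    gcongr
    simp only [norm_mul, norm_div, norm_neg, Complex.norm_I, norm_one, Complex.norm_real,
      Complex.norm_ofNat, Real.norm_eq_abs, mul_pow, div_pow, sq_abs]
    nlinarith [mul_le_mul_of_nonneg_right hl2 (sq_nonneg ‖p0‖),
      mul_le_mul_of_nonneg_right hl2 (sq_nonneg ‖p1‖),
      mul_le_mul_of_nonneg_right hl2 (sq_nonneg ‖p2‖),
      mul_nonneg (sq_nonneg l) (sq_nonneg ‖x1‖), mul_nonneg (sq_nonneg l) (sq_nonneg ‖x2‖),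
      sq_nonneg ‖p0‖, sq_nonneg ‖p1‖, sq_nonneg ‖p2‖]
  rw [norm_mul, mul_pow, Complex.norm_real, Real.norm_eq_abs, sq_abs]
  calc _ ≤ w * ((c ^ 2) ^ 2 * (5 * l ^ 2 *
        (‖p0‖ ^ 2 + ‖p1‖ ^ 2 + ‖p2‖ ^ 2 + ‖x1‖ ^ 2 + ‖x2‖ ^ 2))) := by gcongr
    _ = c ^ 4 * (5 * l ^ 2) * (w * ‖p0‖ ^ 2 + w * ‖p1‖ ^ 2 + w * ‖p2‖ ^ 2 + w * ‖x1‖ ^ 2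
        + w * ‖x2‖ ^ 2) := by ring
    _ ≤ c ^ 4 * (5 * l ^ 2) * (D * (1 + (ξ - 0) ^ 2)⁻¹ + D * (1 + (ξ - a) ^ 2)⁻¹
        + D * (1 + (ξ - -a) ^ 2)⁻¹ + D * (1 + (ξ - a) ^ 2)⁻¹ + D * (1 + (ξ - -a) ^ 2)⁻¹) := by
        gcongr
    _ = _ := by ring

lemma integral_bound (F : ℝ → ℝ) (hF : ∀ ξ, 0 ≤ F ξ) (M a : ℝ)
    (h : ∀ ξ, F ξ ≤ M * ((1 + (ξ - 0) ^ 2)⁻¹ + 2 * (1 + (ξ - a) ^ 2)⁻¹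
        + 2 * (1 + (ξ - -a) ^ 2)⁻¹)) : ∫ ξ, F ξ ≤ M * (5 * Real.pi) := by
  have hi : ∀ b : ℝ, Integrable fun ξ : ℝ => (1 + (ξ - b) ^ 2)⁻¹ := fun b =>
    integrable_inv_one_add_sq.comp_sub_right b
  have hv : ∀ b : ℝ, ∫ ξ : ℝ, (1 + (ξ - b) ^ 2)⁻¹ = Real.pi := fun b => by
    rw [integral_sub_right_eq_self (fun ξ : ℝ => (1 + ξ ^ 2)⁻¹) b, integral_univ_inv_one_add_sq]
  have i1 := (hi a).const_mul 2
  have i2 := (hi (-a)).const_mul 2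
  have := integral_mono_of_nonneg (Eventually.of_forall hF)
    ((((hi 0).add i1).add i2).const_mul M) (Eventually.of_forall h)
  refine this.trans (le_of_eq ?_)
  rw [integral_const_mul]
  congr 1
  have e := integral_add ((hi 0).add i1) i2
  have e' := integral_add (hi 0) i1
  simp only [Pi.add_apply] at e e' ⊢
  rw [e, e', integral_const_mul, integral_const_mul, hv, hv, hv]
  ring

/-- For `s > 3/2` there is `C` (independent of `n`) such that
`‖f_n ∂_x f_n‖_{H^s} ≤ C·2^{-n(s-1)}` for all sufficiently large `n`. -/
theorem fn_deriv_fn_bound (s : ℝ) (hs : 3 / 2 < s) (φhat : ℝ → ℝ) (φ : ℝ → ℂ)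
    (hφ : CutoffPair φhat φ) :
    ∃ C : ℝ, 0 < C ∧ ∃ N : ℕ, ∀ n : ℕ, N ≤ n →
      sobolevNorm s (fun x => fn s φ n x * deriv (fn s φ n) x)
        ≤ C * (2 : ℝ) ^ (-(n : ℝ) * (s - 1)) := by
  obtain ⟨g, hg⟩ := exists_schwartz φhat φ hφ
  obtain rfl : φ = g := funext hg
  have hs0 : 0 ≤ s := by linarith
  obtain ⟨P, hP⟩ : ∃ P : 𝓢(ℝ, ℂ), ∀ x, P x = g x * deriv g x :=
    ⟨SchwartzMap.pairing (ContinuousLinearMap.mul ℂ ℂ) g (SchwartzMap.derivCLM ℂ ℂ g),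
      fun x => rfl⟩
  obtain ⟨X, hX⟩ : ∃ X : 𝓢(ℝ, ℂ), ∀ x, X x = g x * g x :=
    ⟨SchwartzMap.pairing (ContinuousLinearMap.mul ℂ ℂ) g g, fun x => rfl⟩
  obtain ⟨K1, hK1, h1⟩ := schwartz_decay s P
  obtain ⟨K2, hK2, h2⟩ := schwartz_decay s X
  set K := K1 + K2 with hK
  set B : ℝ := 100 * Real.pi * 2 ^ s * 10 ^ s * K with hB
  refine ⟨Real.sqrt B + 1, by positivity, 0, fun n _ => ?_⟩
  have hb := integral_bound _ (fun ξ => by positivity) _ _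
    (pointwise_bound s hs0 g P X hP hX K (fun ξ => (h1 ξ).trans (by linarith))
      (fun ξ => (h2 ξ).trans (by linarith)) n)
  set D : ℝ := (2 : ℝ) ^ (-(n : ℝ) * (s - 1)) with hD
  have hDpos : 0 < D := by positivity
  have hq : (1 : ℝ) ≤ 4 ^ n := one_le_pow₀ (by norm_num)
  have h4 : ((2 : ℝ) ^ n) ^ 2 = 4 ^ n := by rw [← pow_mul, mul_comm, pow_mul]; norm_num
  have hA : (1 + (17 / 6 * (2 : ℝ) ^ n) ^ 2) ^ s ≤ 10 ^ s * (4 ^ n) ^ s := by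
    rw [← Real.mul_rpow (by positivity) (by positivity)]
    apply Real.rpow_le_rpow (by positivity) _ hs0
    rw [mul_pow, h4]; linarith
  have hL : (17 / 12 * (2 : ℝ) ^ n) ^ 2 ≤ 4 * 4 ^ n := by
    rw [mul_pow, h4]; linarith
  have hexp : ((2 : ℝ) ^ (-(n : ℝ) * s)) ^ 4 * 4 ^ n * (4 ^ n) ^ s = D ^ 2 := by
    have e4 : (4 : ℝ) ^ n = 2 ^ (2 * (n : ℝ)) := by
      rw [← h4, ← Real.rpow_natCast 2 n, ← Real.rpow_mul_natCast (by norm_num)]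
      congr 1; push_cast; ring
    rw [e4, hD, ← Real.rpow_mul_natCast (by norm_num), ← Real.rpow_mul_natCast (by norm_num),
      ← Real.rpow_mul (by norm_num), ← Real.rpow_add (by norm_num), ← Real.rpow_add (by norm_num)]
    congr 1; push_cast; ring
  have hfin : ∫ ξ : ℝ, (1 + ξ ^ 2) ^ s *
      ‖fourierT (fun x => fn s g n x * deriv (fn s g n) x) ξ‖ ^ 2 ≤ B * D ^ 2 := by
    refine hb.trans ?_
    calc _ ≤ ((2 : ℝ) ^ (-(n : ℝ) * s)) ^ 4 * (5 * (4 * 4 ^ n)) *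
        (2 ^ s * (10 ^ s * (4 ^ n) ^ s) * K) * (5 * Real.pi) := by gcongr
      _ = B * (((2 : ℝ) ^ (-(n : ℝ) * s)) ^ 4 * 4 ^ n * (4 ^ n) ^ s) := by rw [hB]; ring
      _ = _ := by rw [hexp]
  unfold sobolevNorm
  calc _ ≤ Real.sqrt (B * D ^ 2) := Real.sqrt_le_sqrt hfin
    _ = Real.sqrt B * D := by rw [Real.sqrt_mul' _ (by positivity), Real.sqrt_sq hDpos.le]
    _ ≤ _ := by gcongr; linarith
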